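/- Let D be an integral domain and ⋆ a semistar operation on D. Then D is a ⋆-Dedekind domain if and only if every nonzero quasi-⋆̃-prime ideal of D is quasi-⋆̃-invertible. -/

import Mathlib

open scoped Pointwise

section SemistarDefs

variable {D : Type*} [CommRing D] [IsDomain D]
variable {K : Type*} [Field K] [Algebra D K] [IsFractionRing D K]

/-- `star` is a semistar operation on the integral domain `D` with quotient field `K`:
a map on (nonzero) `D`-submodules of `K` satisfying `(xE)^⋆ = x·E^⋆`, monotonicity,
extensivity and idempotence. -/
structure IsSemistarOperation (star : Submodule D K → Submodule D K) : Prop where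
  ne_bot : ∀ {E : Submodule D K}, E ≠ ⊥ → star E ≠ ⊥
  map_smul : ∀ (x : K), x ≠ 0 → ∀ {E : Submodule D K}, E ≠ ⊥ →
    star (Submodule.map (LinearMap.mulLeft D x) E) = Submodule.map (LinearMap.mulLeft D x) (star E)
  mono : ∀ {E F : Submodule D K}, E ≠ ⊥ → F ≠ ⊥ → E ≤ F → star E ≤ star F
  le_star : ∀ {E : Submodule D K}, E ≠ ⊥ → E ≤ star E
  star_star : ∀ {E : Submodule D K}, E ≠ ⊥ → star (star E) = star E

/-- The image in `K` of an ideal `I` of `D`, as a `D`-submodule of `K`. -/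
def idealExt (K : Type*) [Field K] [Algebra D K] (I : Ideal D) : Submodule D K :=
  Submodule.map (Algebra.linearMap D K) I

/-- `I` is a quasi-⋆-ideal: a nonzero ideal of `D` with `I = I^⋆ ∩ D`. -/
def QuasiStarIdeal (star : Submodule D K → Submodule D K) (I : Ideal D) : Prop :=
  I ≠ ⊥ ∧ Submodule.comap (Algebra.linearMap D K) (star (idealExt K I)) = I

/-- `P` is a quasi-⋆-prime: a prime ideal which is a quasi-⋆-ideal. -/
def QuasiStarPrime (star : Submodule D K → Submodule D K) (P : Ideal D) : Prop :=
  P.IsPrime ∧ QuasiStarIdeal star P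

/-- `M` is a quasi-⋆-maximal ideal: maximal in the set of proper quasi-⋆-ideals of `D`. -/
def QuasiStarMaximal (star : Submodule D K → Submodule D K) (M : Ideal D) : Prop :=
  QuasiStarIdeal star M ∧ M ≠ ⊤ ∧
    ∀ J : Ideal D, QuasiStarIdeal star J → J ≠ ⊤ → M ≤ J → J = M

/-- The finite-type semistar operation `⋆_f` associated to `⋆`:
`E^{⋆_f} = ⋃ { F^⋆ : F nonzero finitely generated, F ⊆ E }`. -/
def finTypeOp (star : Submodule D K → Submodule D K) : Submodule D K → Submodule D K :=
  fun E => ⨆ (F : Submodule D K) (_ : F ≠ ⊥) (_ : F.FG) (_ : F ≤ E), star F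

/-- The extension `E·D_Q` of a `D`-submodule `E` of `K` to the localization of `D` at
(the complement of) `Q`, described as `{ x ∈ K : s·x ∈ E for some s ∉ Q }`. -/
def extendToPrime (Q : Ideal D) (E : Submodule D K) : Submodule D K :=
  Submodule.span D {x : K | ∃ s : D, s ∉ Q ∧ algebraMap D K s * x ∈ E}

/-- The stable semistar operation of finite type `⋆̃` associated to `⋆`:
`E^⋆̃ = ⋂ { E·D_Q : Q a quasi-⋆_f-maximal ideal of D }`. -/
def stableOp (star : Submodule D K → Submodule D K) : Submodule D K → Submodule D K :=
  fun E => ⨅ (Q : Ideal D) (_ : QuasiStarMaximal (finTypeOp star) Q), extendToPrime Q E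

/-- A rank-one discrete valuation ring: a (domain which is a) local PID which is not a field. -/
def IsDVR (R : Type*) [CommRing R] : Prop :=
  ∃ h : IsDomain R, @IsDiscreteValuationRing R _ h

/-- A valuation domain. -/
def IsValuationDomain (R : Type*) [CommRing R] : Prop :=
  ∃ h : IsDomain R, @ValuationRing R _ h

/-- `D` is a ⋆-almost Dedekind domain: `D_M` is a rank-one discrete valuation ring for
every quasi-⋆_f-maximal ideal `M` of `D`. -/
def StarADD (star : Submodule D K → Submodule D K) : Prop :=
  ∀ (M : Ideal D) [M.IsPrime], QuasiStarMaximal (finTypeOp star) M →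
    IsDVR (Localization.AtPrime M)

/-- `D` is a Prüfer ⋆-multiplication domain: `D_M` is a valuation domain for every
quasi-⋆_f-maximal ideal `M` of `D`. -/
def StarPMD (star : Submodule D K → Submodule D K) : Prop :=
  ∀ (M : Ideal D) [M.IsPrime], QuasiStarMaximal (finTypeOp star) M →
    IsValuationDomain (Localization.AtPrime M)

/-- `D` is ⋆-Noetherian: ascending chain condition on quasi-⋆-ideals. -/
def StarNoetherian (star : Submodule D K → Submodule D K) : Prop :=
  ∀ c : ℕ →o Ideal D, (∀ n, QuasiStarIdeal star (c n)) → ∃ n, ∀ m, n ≤ m → c m = c n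

/-- `D` is a ⋆-Dedekind domain: ⋆-Noetherian and a P⋆MD. -/
def StarDedekind (star : Submodule D K → Submodule D K) : Prop :=
  StarNoetherian star ∧ StarPMD star

/-- `D` has the ⋆_f-finite character property: every nonzero element of `D` lies in only
finitely many quasi-⋆_f-maximal ideals. -/
def StarFiniteCharacter (star : Submodule D K → Submodule D K) : Prop :=
  ∀ d : D, d ≠ 0 → {M : Ideal D | QuasiStarMaximal (finTypeOp star) M ∧ d ∈ M}.Finite

/-- The `v`-operation `E ↦ (D : (D : E))`. -/
def vOp : Submodule D K → Submodule D K := fun E => 1 / (1 / E)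

/-- A nonzero `D`-submodule `E` of `K` is quasi-∗-invertible if `(E·(D^∗ : E))^∗ = D^∗`. -/
def QuasiStarInvertible (star : Submodule D K → Submodule D K) (E : Submodule D K) : Prop :=
  star (E * (star 1 / E)) = star (1 : Submodule D K)

/-- `D` has the ∗-cancellation law: for nonzero fractional ideals `A`, `B`, `C`,
`(AB)^∗ = (AC)^∗` implies `B^∗ = C^∗`. -/
def StarCancellation (star : Submodule D K → Submodule D K) : Prop :=
  ∀ A B C : Submodule D K, A ≠ ⊥ → B ≠ ⊥ → C ≠ ⊥ →
    IsFractional (nonZeroDivisors D) A → IsFractional (nonZeroDivisors D) B →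
    IsFractional (nonZeroDivisors D) C →
    star (A * B) = star (A * C) → star B = star C

/-- The ∗-dimension of `D`: the supremum of the lengths of chains of quasi-∗-prime ideals
of `D` (between `(0)` and a quasi-∗-prime). -/
noncomputable def starDim (star : Submodule D K → Submodule D K) : ℕ∞ :=
  ⨆ (k : ℕ) (_ : ∃ c : Fin k → Ideal D, StrictMono c ∧ ∀ i, QuasiStarPrime star (c i)),
    (k : ℕ∞)

/-- A submodule `T` of `K` (containing the image of an integral domain with quotient
field `K`) is integrally closed (in `K`) if every `x ∈ K` satisfying a monic polynomial
equation with coefficients in `T` belongs to `T`. -/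
def IntegrallyClosedSub (T : Submodule D K) : Prop :=
  ∀ x : K, (∃ (n : ℕ) (c : Fin n → K), (∀ i, c i ∈ T) ∧
    x ^ n = ∑ i : Fin n, c i * x ^ (i : ℕ)) → x ∈ T

/-- The content ideal `c(p)` of a polynomial: the ideal generated by its coefficients. -/
def contentIdeal (p : Polynomial D) : Ideal D := Ideal.span (Set.range p.coeff)

/-- The multiplicative set `N(⋆) = { h ∈ D[X] : h ≠ 0, c(h)^⋆ = D^⋆ }` (as a submonoid,
via the closure of this multiplicatively closed set). -/
noncomputable def nagataMonoid (star : Submodule D K → Submodule D K) : Submonoid (Polynomial D) :=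
  Submonoid.closure
    {p : Polynomial D | p ≠ 0 ∧ star (idealExt K (contentIdeal p)) = star (1 : Submodule D K)}

/-- The Nagata ring `Na(D,⋆) = D[X]_{N(⋆)}`. -/
abbrev NagataRing (star : Submodule D K → Submodule D K) :=
  Localization (nagataMonoid star)

/-- `V` is a valuation overring of `D` (inside the quotient field `K`): `D ⊆ V ⊆ K` and
for every nonzero `x ∈ K`, `x ∈ V` or `x⁻¹ ∈ V`. -/
def IsValuationOverring (D : Type*) [CommRing D] {K : Type*} [Field K] [Algebra D K]
    (V : Subring K) : Prop :=
  (∀ d : D, algebraMap D K d ∈ V) ∧ ∀ x : K, x ≠ 0 → (x ∈ V ∨ x⁻¹ ∈ V)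

/-- `V` is a ∗-valuation overring of `D`: a valuation overring such that `F^∗ ⊆ FV` for
every nonzero finitely generated `D`-submodule `F` of `K`. -/
def IsStarValuationOverring (star : Submodule D K → Submodule D K) (V : Subring K) : Prop :=
  IsValuationOverring D V ∧
    ∀ F : Submodule D K, F ≠ ⊥ → F.FG →
      star F ≤ Submodule.span D ((F : Set K) * (V : Set K))

/-- `D` is a Krull domain: there is a family of rank-one discrete valuation overrings of `D`
with quotient field `K` whose intersection is `D`, with finite character. -/
def IsKrullDomain (D : Type*) [CommRing D] (K : Type*) [Field K] [Algebra D K] : Prop :=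
  ∃ 𝒱 : Set (Subring K),
    (∀ V ∈ 𝒱, (∀ d : D, algebraMap D K d ∈ V) ∧ IsDVR V ∧
      ∀ x : K, ∃ a ∈ V, ∃ b ∈ V, b ≠ 0 ∧ x * b = a) ∧
    (⋂ V ∈ 𝒱, (V : Set K)) = Set.range (algebraMap D K) ∧
    ∀ d : D, d ≠ 0 → {V ∈ 𝒱 | ¬ ∃ y ∈ V, algebraMap D K d * y = 1}.Finite

end SemistarDefs

/-!
Everything is local at the quasi-⋆_f-maximal ideals `Q`, which are prime. An ideal contained in no
such `Q` has `1` in its ⋆_f-closure, so some finitely generated subideal is contained in no `Q`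
either; hence `⋆̃` is of finite type, and `⋆̃ ≤ ⋆_f`.

If `D` is ⋆-Dedekind, the chain condition gives every nonzero ideal `I` a finitely generated
`F ⊆ I` with `I ⊆ F^⋆`. For each `Q`, the valuation ring `D_Q` contains `D^{⋆_f}` and `F·D_Q` is
principal, so `F` is invertible at `Q` and `F^⋆ ⊆ F·D_Q`. Thus `I ⊆ F^⋆̃`, and `(D : F)` is a
⋆̃-inverse of `I`.

Conversely, a quasi-⋆̃-invertible ideal is ⋆̃-finite, and so is a prime contained in no `Q`. The
⋆̃-finite ideals form an Oka family, so, as in Cohen's theorem, all ideals are ⋆̃-finite, and the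
chain condition on quasi-⋆-ideals follows from `⋆̃ ≤ ⋆`. Moreover every prime of `D_Q` is the
extension of a prime which is zero or quasi-⋆̃-invertible, hence it is principal; so `D_Q` is a
local principal ideal domain.
-/

section Finitary

variable {R M N L : Type*} [Semiring R]
  [AddCommMonoid M] [Module R M] [AddCommMonoid N] [Module R N] [AddCommMonoid L] [Module R L]

/-- A finitary (algebraic) operator on submodules: a monotone map whose value at `E` is the union
of its values at the finitely generated submodules of `E`. -/
structure IsFinitary (φ : Submodule R M → Submodule R N) : Prop where
  mono : Monotone φ
  exists_fg : ∀ {E : Submodule R M} {y : N}, y ∈ φ E → ∃ F ≤ E, F.FG ∧ y ∈ φ F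

theorem IsFinitary.exists_fg_le {φ : Submodule R M → Submodule R N} (hφ : IsFinitary φ)
    {E : Submodule R M} {G : Submodule R N} (hG : G.FG) (hGE : G ≤ φ E) :
    ∃ F ≤ E, F.FG ∧ G ≤ φ F := by
  induction G, hG using Submodule.fg_induction with
  | singleton y =>
    obtain ⟨F, hFE, hF, hy⟩ := hφ.exists_fg (hGE (Submodule.mem_span_singleton_self y))
    exact ⟨F, hFE, hF, (Submodule.span_singleton_le_iff_mem _ _).2 hy⟩
  | sup G₁ G₂ _ _ ih₁ ih₂ =>
    obtain ⟨F₁, hFE₁, hF₁, hG₁⟩ := ih₁ (le_sup_left.trans hGE)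
    obtain ⟨F₂, hFE₂, hF₂, hG₂⟩ := ih₂ (le_sup_right.trans hGE)
    exact ⟨F₁ ⊔ F₂, sup_le hFE₁ hFE₂, hF₁.sup hF₂,
      sup_le (hG₁.trans (hφ.mono le_sup_left)) (hG₂.trans (hφ.mono le_sup_right))⟩

theorem IsFinitary.comp {ψ : Submodule R N → Submodule R L} {φ : Submodule R M → Submodule R N}
    (hψ : IsFinitary ψ) (hφ : IsFinitary φ) : IsFinitary (ψ ∘ φ) where
  mono := hψ.mono.comp hφ.mono
  exists_fg hy := by
    obtain ⟨G, hGE, hG, hyG⟩ := hψ.exists_fg hy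
    obtain ⟨F, hFE, hF, hGF⟩ := hφ.exists_fg_le hG hGE
    exact ⟨F, hFE, hF, hψ.mono hGF hyG⟩

theorem isFinitary_map (f : M →ₗ[R] N) : IsFinitary (Submodule.map f) where
  mono _ _ h := Submodule.map_mono h
  exists_fg := by
    rintro E _ ⟨x, hx, rfl⟩
    exact ⟨R ∙ x, (Submodule.span_singleton_le_iff_mem _ _).2 hx, Submodule.fg_span_singleton x,
      Submodule.mem_map_of_mem (Submodule.mem_span_singleton_self x)⟩

theorem isFinitary_sup_right (E : Submodule R M) : IsFinitary (· ⊔ E) where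
  mono _ _ h := sup_le_sup_right h E
  exists_fg hy := by
    obtain ⟨x, hx, e, he, rfl⟩ := Submodule.mem_sup.1 hy
    exact ⟨R ∙ x, (Submodule.span_singleton_le_iff_mem _ _).2 hx, Submodule.fg_span_singleton x,
      Submodule.add_mem_sup (Submodule.mem_span_singleton_self x) he⟩

theorem isFinitary_mul_right {R A : Type*} [CommSemiring R] [Semiring A] [Algebra R A]
    (W : Submodule R A) : IsFinitary (· * W) where
  mono _ _ h := mul_le_mul_left h W
  exists_fg {E y} hy := by
    induction hy using Submodule.mul_induction_on' with
    | mem_mul_mem x hx w hw =>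
      exact ⟨R ∙ x, (Submodule.span_singleton_le_iff_mem _ _).2 hx, Submodule.fg_span_singleton x,
        Submodule.mul_mem_mul (Submodule.mem_span_singleton_self x) hw⟩
    | add y₁ _ y₂ _ ih₁ ih₂ =>
      obtain ⟨F₁, hFE₁, hF₁, hy₁⟩ := ih₁
      obtain ⟨F₂, hFE₂, hF₂, hy₂⟩ := ih₂
      exact ⟨F₁ ⊔ F₂, sup_le hFE₁ hFE₂, hF₁.sup hF₂, Submodule.add_mem _
        (mul_le_mul_left le_sup_left W hy₁) (mul_le_mul_left le_sup_right W hy₂)⟩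

theorem exists_le_of_fg_of_le_sSup {F : Submodule R M} (hF : F.FG) {c : Set (Submodule R M)}
    (hne : c.Nonempty) (hc : DirectedOn (· ≤ ·) c) (hFc : F ≤ sSup c) : ∃ E ∈ c, F ≤ E :=
  (CompleteLattice.isCompactElement_iff_le_of_directed_sSup_le _ F).1
    ((Submodule.fg_iff_compact F).1 hF) c hne hc hFc

end Finitary

section IdealExt

variable {D K : Type*} [CommRing D] [Field K] [Algebra D K]

theorem idealExt_mono : Monotone (idealExt (D := D) K) := fun _ _ h => Submodule.map_mono h

theorem algebraMap_mem_idealExt [FaithfulSMul D K] {I : Ideal D} {x : D} :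
    algebraMap D K x ∈ idealExt K I ↔ x ∈ I :=
  (FaithfulSMul.algebraMap_injective D K).mem_set_image

theorem idealExt_ne_bot [FaithfulSMul D K] {I : Ideal D} (hI : I ≠ ⊥) : idealExt K I ≠ ⊥ :=
  Submodule.map_bot (Algebra.linearMap D K) ▸
    (Submodule.map_injective_of_injective (FaithfulSMul.algebraMap_injective D K)).ne hI

end IdealExt

section Semistar

variable {D K : Type*} [CommRing D] [Field K] [Algebra D K] {star : Submodule D K → Submodule D K}

theorem map_mulLeft_ne_bot {x : K} (hx : x ≠ 0) {E : Submodule D K} (hE : E ≠ ⊥) :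
    E.map (LinearMap.mulLeft D x) ≠ ⊥ :=
  Submodule.map_bot (LinearMap.mulLeft D x) ▸
    (Submodule.map_injective_of_injective (mul_right_injective₀ hx)).ne hE

theorem map_mulLeft_map_mulLeft_inv {x : K} (hx : x ≠ 0) (E : Submodule D K) :
    (E.map (LinearMap.mulLeft D x⁻¹)).map (LinearMap.mulLeft D x) = E := by
  rw [← Submodule.map_comp, ← LinearMap.mulLeft_mul, mul_inv_cancel₀ hx, LinearMap.mulLeft_one,
    Submodule.map_id]

namespace IsSemistarOperation

variable {E F : Submodule D K}

theorem star_le_star_of_le_star (hs : IsSemistarOperation star) (hE : E ≠ ⊥) (hF : F ≠ ⊥)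
    (h : E ≤ star F) : star E ≤ star F :=
  hs.star_star hF ▸ hs.mono hE (hs.ne_bot hF) h

theorem mul_mem_star (hs : IsSemistarOperation star) (hF : F ≠ ⊥) {x y : K}
    (h : ∀ z ∈ F, x * z ∈ E) (hy : y ∈ star F) : x * y ∈ star E := by
  obtain rfl | hx := eq_or_ne x 0
  · simp only [zero_mul, zero_mem]
  have hle : F.map (LinearMap.mulLeft D x) ≤ E := Submodule.map_le_iff_le_comap.2 h
  have hxF := map_mulLeft_ne_bot hx hF
  apply hs.mono hxF (ne_bot_of_le_ne_bot hxF hle) hle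
  rw [hs.map_smul x hx hF]
  exact Submodule.mem_map_of_mem hy

end IsSemistarOperation

end Semistar

section FiniteType

variable {D K : Type*} [CommRing D] [Field K] [Algebra D K]
  {star : Submodule D K → Submodule D K} {E : Submodule D K}

theorem finTypeOp_mono (star : Submodule D K → Submodule D K) : Monotone (finTypeOp star) :=
  fun _ _ h => iSup₂_mono fun _ _ => iSup_mono fun _ => iSup_mono' fun hF => ⟨hF.trans h, le_rfl⟩

theorem star_le_finTypeOp (star : Submodule D K → Submodule D K) (hE : E ≠ ⊥) (hfg : E.FG) :
    star E ≤ finTypeOp star E :=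
  le_iSup₂_of_le E hE (le_iSup₂_of_le hfg le_rfl le_rfl)

theorem finTypeOp_bot : finTypeOp star ⊥ = ⊥ := by
  simp only [finTypeOp, iSup_eq_bot]
  exact fun F hF _ hle => absurd (le_bot_iff.1 hle) hF

namespace IsSemistarOperation

theorem finTypeOp_le_star (hs : IsSemistarOperation star) (hE : E ≠ ⊥) :
    finTypeOp star E ≤ star E :=
  iSup₂_le fun _ hF => iSup₂_le fun _ hle => hs.mono hF hE hle

theorem mem_finTypeOp (hs : IsSemistarOperation star) (hE : E ≠ ⊥) {y : K} :
    y ∈ finTypeOp star E ↔ ∃ F ≠ ⊥, F.FG ∧ F ≤ E ∧ y ∈ star F := by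
  refine ⟨fun hy => ?_, fun ⟨F, hF, hfg, hFE, hy⟩ =>
    finTypeOp_mono star hFE (star_le_finTypeOp star hF hfg hy)⟩
  let ι := {F : Submodule D K // F ≠ ⊥ ∧ F.FG ∧ F ≤ E}
  have hsup : finTypeOp star E = ⨆ F : ι, star F := by
    simp only [finTypeOp, ι, iSup_subtype, iSup_and]
  have hne : Nonempty ι := by
    obtain ⟨x, hxE, hx⟩ := Submodule.exists_mem_ne_zero_of_ne_bot hE
    exact ⟨D ∙ x, by simpa using hx, Submodule.fg_span_singleton x,
      (Submodule.span_singleton_le_iff_mem _ _).2 hxE⟩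
  have hdir : Directed (· ≤ ·) fun F : ι => star F := by
    rintro ⟨F, hF, hFfg, hFE⟩ ⟨G, hG, hGfg, hGE⟩
    have hFG : F ⊔ G ≠ ⊥ := ne_bot_of_le_ne_bot hF le_sup_left
    exact ⟨⟨F ⊔ G, hFG, hFfg.sup hGfg, sup_le hFE hGE⟩, hs.mono hF hFG le_sup_left,
      hs.mono hG hFG le_sup_right⟩
  rw [hsup, Submodule.mem_iSup_of_directed _ hdir] at hy
  obtain ⟨⟨F, hF, hfg, hFE⟩, hy⟩ := hy
  exact ⟨F, hF, hfg, hFE, hy⟩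

theorem isFinitary_finTypeOp (hs : IsSemistarOperation star) : IsFinitary (finTypeOp star) where
  mono := finTypeOp_mono star
  exists_fg {E y} hy := by
    obtain rfl | hE := eq_or_ne E ⊥
    · exact ⟨⊥, le_rfl, Submodule.fg_bot, hy⟩
    · obtain ⟨F, hF, hfg, hFE, hy⟩ := (hs.mem_finTypeOp hE).1 hy
      exact ⟨F, hFE, hfg, star_le_finTypeOp star hF hfg hy⟩

theorem le_finTypeOp (hs : IsSemistarOperation star) : E ≤ finTypeOp star E := by
  intro x hx
  obtain rfl | hx0 := eq_or_ne x 0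
  · exact zero_mem _
  have hspan : D ∙ x ≠ ⊥ := by simpa using hx0
  exact finTypeOp_mono star ((Submodule.span_singleton_le_iff_mem _ _).2 hx)
    (star_le_finTypeOp star hspan (Submodule.fg_span_singleton x)
      (hs.le_star hspan (Submodule.mem_span_singleton_self x)))

theorem finTypeOp_finTypeOp_le (hs : IsSemistarOperation star) :
    finTypeOp star (finTypeOp star E) ≤ finTypeOp star E := by
  refine iSup₂_le fun G hG => iSup₂_le fun hGfg hGE => ?_
  obtain ⟨F, hFE, hFfg, hGF⟩ := hs.isFinitary_finTypeOp.exists_fg_le hGfg hGE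
  have hF : F ≠ ⊥ := by
    rintro rfl
    exact hG (le_bot_iff.1 (finTypeOp_bot (star := star) ▸ hGF))
  exact (hs.star_le_star_of_le_star hG hF (hGF.trans (hs.finTypeOp_le_star hF))).trans
    ((star_le_finTypeOp star hF hFfg).trans (finTypeOp_mono star hFE))

theorem map_mulLeft_finTypeOp_le (hs : IsSemistarOperation star) {x : K} (hx : x ≠ 0)
    (E : Submodule D K) : (finTypeOp star E).map (LinearMap.mulLeft D x) ≤
      finTypeOp star (E.map (LinearMap.mulLeft D x)) := by
  simp only [finTypeOp, Submodule.map_iSup]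
  refine iSup₂_le fun F hF => iSup₂_le fun hfg hFE => ?_
  rw [← hs.map_smul x hx hF]
  exact (star_le_finTypeOp star (map_mulLeft_ne_bot hx hF) (hfg.map _)).trans
    (finTypeOp_mono star (Submodule.map_mono hFE))

protected theorem finTypeOp (hs : IsSemistarOperation star) :
    IsSemistarOperation (finTypeOp star) where
  ne_bot hE := ne_bot_of_le_ne_bot hE hs.le_finTypeOp
  map_smul x hx E _ := by
    refine le_antisymm ?_ (hs.map_mulLeft_finTypeOp_le hx E)
    have h := hs.map_mulLeft_finTypeOp_le (inv_ne_zero hx) (E.map (LinearMap.mulLeft D x))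
    have hE := map_mulLeft_map_mulLeft_inv (inv_ne_zero hx) E
    rw [inv_inv] at hE
    rw [hE] at h
    simpa only [map_mulLeft_map_mulLeft_inv hx] using
      Submodule.map_mono (f := LinearMap.mulLeft D x) h
  mono _ _ h := finTypeOp_mono star h
  le_star _ := hs.le_finTypeOp
  star_star _ := le_antisymm hs.finTypeOp_finTypeOp_le hs.le_finTypeOp

end IsSemistarOperation

end FiniteType

section QuasiIdeal

variable {D K : Type*} [CommRing D] [Field K] [Algebra D K]
  {star : Submodule D K → Submodule D K} {I J Q : Ideal D}

/-- The ideal `I^⋆ ∩ D` of `D`; the quasi-⋆-ideals are the nonzero ideals `I` which it fixes. -/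
def starClosure (star : Submodule D K → Submodule D K) (I : Ideal D) : Ideal D :=
  (star (idealExt K I)).comap (Algebra.linearMap D K)

theorem starClosure_eq_top : starClosure star I = ⊤ ↔ 1 ∈ star (idealExt K I) := by
  rw [Ideal.eq_top_iff_one, starClosure, Submodule.mem_comap, Algebra.linearMap_apply,
    map_one]

namespace IsSemistarOperation

variable [FaithfulSMul D K]

theorem le_starClosure (hs : IsSemistarOperation star) (hI : I ≠ ⊥) : I ≤ starClosure star I :=
  fun _ hx => hs.le_star (idealExt_ne_bot hI) (Submodule.mem_map_of_mem hx)

theorem starClosure_mono (hs : IsSemistarOperation star) (hI : I ≠ ⊥) (hIJ : I ≤ J) :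
    starClosure star I ≤ starClosure star J :=
  Submodule.comap_mono <| hs.mono (idealExt_ne_bot hI)
    (idealExt_ne_bot (ne_bot_of_le_ne_bot hI hIJ)) (idealExt_mono hIJ)

theorem quasiStarIdeal_starClosure (hs : IsSemistarOperation star) (hI : I ≠ ⊥) :
    QuasiStarIdeal star (starClosure star I) := by
  have hcl := ne_bot_of_le_ne_bot hI (hs.le_starClosure hI)
  exact ⟨hcl, le_antisymm (Submodule.comap_mono (hs.star_le_star_of_le_star (idealExt_ne_bot hcl)
    (idealExt_ne_bot hI) (Submodule.map_comap_le _ _))) (hs.le_starClosure hcl)⟩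

end IsSemistarOperation

theorem QuasiStarMaximal.one_notMem (hQ : QuasiStarMaximal star Q) : 1 ∉ star (idealExt K Q) :=
  fun h => hQ.2.1 (hQ.1.2 ▸ starClosure_eq_top.2 h)

theorem QuasiStarMaximal.isPrime [FaithfulSMul D K] (hQ : QuasiStarMaximal star Q)
    (hs : IsSemistarOperation star) : Q.IsPrime := by
  refine ⟨hQ.2.1, fun {a b} hab => or_iff_not_imp_left.2 fun ha => ?_⟩
  have hJ : Ideal.span {a} ⊔ Q ≠ ⊥ := ne_bot_of_le_ne_bot hQ.1.1 le_sup_right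
  have hle := hs.le_starClosure hJ
  have htop : starClosure star (Ideal.span {a} ⊔ Q) = ⊤ := by
    by_contra hne
    have heq := hQ.2.2 _ (hs.quasiStarIdeal_starClosure hJ) hne (le_sup_right.trans hle)
    exact ha (heq ▸ hle (Ideal.mem_sup_left (Ideal.mem_span_singleton_self a)))
  have hmul : ∀ z ∈ idealExt K (Ideal.span {a} ⊔ Q), algebraMap D K b * z ∈ idealExt K Q := by
    rintro _ ⟨z, hz, rfl⟩
    obtain ⟨c, q, hq, rfl⟩ := Ideal.mem_span_singleton_sup.1 hz
    refine ⟨b * (c * a + q), ?_, map_mul (algebraMap D K) _ _⟩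
    rw [mul_add, mul_left_comm, mul_comm b a]
    exact Q.add_mem (Q.mul_mem_left _ hab) (Q.mul_mem_left _ hq)
  have hb := hs.mul_mem_star (idealExt_ne_bot hJ) hmul (starClosure_eq_top.1 htop)
  rw [mul_one] at hb
  exact hQ.1.2 ▸ hb

theorem IsSemistarOperation.exists_quasiStarMaximal [FaithfulSMul D K]
    (hs : IsSemistarOperation star) (hI : I ≠ ⊥) (h1 : 1 ∉ finTypeOp star (idealExt K I)) :
    ∃ Q, QuasiStarMaximal (finTypeOp star) Q ∧ I ≤ Q := by
  have hfin := hs.isFinitary_finTypeOp.comp (isFinitary_map (Algebra.linearMap D K))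
  obtain ⟨Q, hIQ, hQ⟩ := zorn_le_nonempty₀ {J : Ideal D | 1 ∉ finTypeOp star (idealExt K J)}
    (fun c hc hchain J hJ => ⟨sSup c, fun h => by
      obtain ⟨G, hGle, hG, h1G⟩ := hfin.exists_fg h
      obtain ⟨J', hJ', hGJ'⟩ := exists_le_of_fg_of_le_sSup hG ⟨J, hJ⟩ hchain.directedOn hGle
      exact hc hJ' (hfin.mono hGJ' h1G), fun _ => le_sSup⟩) I h1
  have hQ0 := ne_bot_of_le_ne_bot hI hIQ
  have hcl := hs.finTypeOp.quasiStarIdeal_starClosure hQ0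
  have hle := hs.finTypeOp.le_starClosure hQ0
  have hproper : 1 ∉ finTypeOp star (idealExt K (starClosure (finTypeOp star) Q)) := fun h =>
    hQ.prop (starClosure_eq_top.1 (hcl.2 ▸ starClosure_eq_top.2 h))
  refine ⟨Q, ⟨⟨hQ0, (hQ.eq_of_le hproper hle).symm⟩, ?_, fun J hJ hJtop hQJ => ?_⟩, hIQ⟩
  · rintro rfl
    exact hQ.prop (starClosure_eq_top.1 (top_le_iff.1 hle))
  · exact (hQ.eq_of_le (fun h => hJtop (hJ.2 ▸ starClosure_eq_top.2 h)) hQJ).symm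

theorem IsSemistarOperation.exists_fg_forall_not_le [FaithfulSMul D K]
    (hs : IsSemistarOperation star) (hI : ∀ Q, QuasiStarMaximal (finTypeOp star) Q → ¬ I ≤ Q) :
    ∃ G ≤ I, G.FG ∧ ∀ Q, QuasiStarMaximal (finTypeOp star) Q → ¬ G ≤ Q := by
  obtain rfl | hI0 := eq_or_ne I ⊥
  · exact ⟨⊥, le_rfl, Submodule.fg_bot, hI⟩
  have h1 : 1 ∈ finTypeOp star (idealExt K I) := by
    by_contra h1
    obtain ⟨Q, hQ, hIQ⟩ := hs.exists_quasiStarMaximal hI0 h1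
    exact hI Q hQ hIQ
  obtain ⟨G, hGI, hG, h1G⟩ :=
    (hs.isFinitary_finTypeOp.comp (isFinitary_map (Algebra.linearMap D K))).exists_fg h1
  exact ⟨G, hGI, hG, fun Q hQ hGQ =>
    hQ.one_notMem (finTypeOp_mono star (idealExt_mono hGQ) h1G)⟩

end QuasiIdeal

section ExtendToPrime

variable {D K : Type*} [CommRing D] [Field K] [Algebra D K]
  {Q : Ideal D} {E F W : Submodule D K} {x y : K}

theorem extendToPrime_mono (Q : Ideal D) : Monotone (extendToPrime (K := K) Q) :=
  fun _ _ h => Submodule.span_mono fun _ ⟨s, hs, hx⟩ => ⟨s, hs, h hx⟩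

variable [Q.IsPrime]

theorem mem_extendToPrime : x ∈ extendToPrime Q E ↔ ∃ s ∉ Q, s • x ∈ E := by
  simp only [Algebra.smul_def]
  refine ⟨fun hx => ?_, fun ⟨s, hs, hx⟩ => Submodule.subset_span ⟨s, hs, hx⟩⟩
  induction hx using Submodule.span_induction with
  | mem _ hx => exact hx
  | zero => exact ⟨1, Q.one_notMem, by simp only [mul_zero, zero_mem]⟩
  | add x y _ _ ihx ihy =>
    obtain ⟨⟨s, hs, hx⟩, t, ht, hy⟩ := ihx, ihy
    refine ⟨s * t, Ideal.IsPrime.mul_notMem ‹_› hs ht, ?_⟩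
    convert E.add_mem (E.smul_mem t hx) (E.smul_mem s hy) using 1
    simp only [Algebra.smul_def, map_mul]
    ring
  | smul d x _ ih =>
    obtain ⟨s, hs, hx⟩ := ih
    refine ⟨s, hs, ?_⟩
    rw [mul_smul_comm]
    exact E.smul_mem d hx

theorem mem_extendToPrime_iff_not_colon_le : x ∈ extendToPrime Q E ↔ ¬ E.colon {x} ≤ Q := by
  simp only [mem_extendToPrime, SetLike.not_le_iff_exists, Submodule.mem_colon_singleton, and_comm]

theorem le_extendToPrime : E ≤ extendToPrime Q E :=
  fun x hx => mem_extendToPrime.2 ⟨1, Q.one_notMem, by rwa [one_smul]⟩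

theorem mul_mem_extendToPrime (h : ∀ z ∈ F, x * z ∈ extendToPrime Q E)
    (hy : y ∈ extendToPrime Q F) : x * y ∈ extendToPrime Q E := by
  obtain ⟨s, hs, hsy⟩ := mem_extendToPrime.1 hy
  obtain ⟨t, ht, htsy⟩ := mem_extendToPrime.1 (h _ hsy)
  refine mem_extendToPrime.2 ⟨t * s, Ideal.IsPrime.mul_notMem ‹_› ht hs, ?_⟩
  rwa [mul_smul, ← mul_smul_comm s]

theorem extendToPrime_le_extendToPrime (h : F ≤ extendToPrime Q E) :
    extendToPrime Q F ≤ extendToPrime Q E := fun y hy => by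
  rw [← one_mul y]
  exact mul_mem_extendToPrime (fun z hz => by rw [one_mul]; exact h hz) hy

theorem mul_mem_extendToPrime_of_mem_one (hx : x ∈ E) (hy : y ∈ extendToPrime Q 1) :
    x * y ∈ extendToPrime Q E := by
  refine mul_mem_extendToPrime (fun z hz => le_extendToPrime ?_) hy
  rw [← mul_one E]
  exact Submodule.mul_mem_mul hx hz

theorem mem_extendToPrime_of_one_mem_mul (h1 : 1 ∈ extendToPrime Q (E * W))
    (hy : ∀ w ∈ W, y * w ∈ extendToPrime Q 1) : y ∈ extendToPrime Q E := by
  rw [← mul_one y]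
  refine mul_mem_extendToPrime (fun z hz => ?_) h1
  induction hz using Submodule.mul_induction_on' with
  | mem_mul_mem e he w hw =>
    rw [mul_left_comm]
    exact mul_mem_extendToPrime_of_mem_one he (hy w hw)
  | add z₁ _ z₂ _ ih₁ ih₂ =>
    rw [mul_add]
    exact add_mem ih₁ ih₂

end ExtendToPrime

section StableOp

variable {D K : Type*} [CommRing D] [Field K] [Algebra D K]
  {star : Submodule D K → Submodule D K} {E F W : Submodule D K} {x y : K}

theorem mem_stableOp :
    x ∈ stableOp star E ↔ ∀ Q, QuasiStarMaximal (finTypeOp star) Q → x ∈ extendToPrime Q E := by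
  simp only [stableOp, Submodule.mem_iInf]

theorem stableOp_mono (star : Submodule D K → Submodule D K) : Monotone (stableOp star) :=
  fun _ _ h => iInf₂_mono fun Q _ => extendToPrime_mono Q h

theorem stableOp_le_extendToPrime {Q : Ideal D} (hQ : QuasiStarMaximal (finTypeOp star) Q) :
    stableOp star E ≤ extendToPrime Q E :=
  iInf₂_le Q hQ

namespace IsSemistarOperation

variable [FaithfulSMul D K]

theorem le_stableOp (hs : IsSemistarOperation star) : E ≤ stableOp star E :=
  le_iInf₂ fun _ hQ => have := hQ.isPrime hs.finTypeOp; le_extendToPrime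

theorem stableOp_le_stableOp (hs : IsSemistarOperation star) (h : F ≤ stableOp star E) :
    stableOp star F ≤ stableOp star E :=
  le_iInf₂ fun _ hQ =>
    have := hQ.isPrime hs.finTypeOp
    (stableOp_le_extendToPrime hQ).trans
      (extendToPrime_le_extendToPrime (h.trans (stableOp_le_extendToPrime hQ)))

theorem mul_mem_stableOp (hs : IsSemistarOperation star)
    (h : ∀ z ∈ F, x * z ∈ stableOp star E) (hy : y ∈ stableOp star F) :
    x * y ∈ stableOp star E :=
  mem_stableOp.2 fun Q hQ =>
    have := hQ.isPrime hs.finTypeOp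
    mul_mem_extendToPrime (fun z hz => mem_stableOp.1 (h z hz) Q hQ) (mem_stableOp.1 hy Q hQ)

theorem mem_stableOp_of_one_mem_mul (hs : IsSemistarOperation star)
    (h1 : 1 ∈ stableOp star (E * W)) (hy : ∀ w ∈ W, y * w ∈ stableOp star 1) :
    y ∈ stableOp star E :=
  mem_stableOp.2 fun Q hQ =>
    have := hQ.isPrime hs.finTypeOp
    mem_extendToPrime_of_one_mem_mul (mem_stableOp.1 h1 Q hQ)
      fun w hw => mem_stableOp.1 (hy w hw) Q hQ

theorem exists_fg_le_colon (hs : IsSemistarOperation star) (hx : x ∈ stableOp star E) :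
    ∃ G ≤ E.colon {x}, G.FG ∧ ∀ Q, QuasiStarMaximal (finTypeOp star) Q → ¬ G ≤ Q :=
  hs.exists_fg_forall_not_le fun Q hQ =>
    have := hQ.isPrime hs.finTypeOp
    mem_extendToPrime_iff_not_colon_le.1 (mem_stableOp.1 hx Q hQ)

theorem isFinitary_stableOp (hs : IsSemistarOperation star) : IsFinitary (stableOp star) where
  mono := stableOp_mono star
  exists_fg {E x} hx := by
    obtain ⟨G, hGE, hG, hGQ⟩ := hs.exists_fg_le_colon hx
    refine ⟨Submodule.map (LinearMap.toSpanSingleton D K x) G, ?_, Submodule.FG.map _ hG,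
      mem_stableOp.2 fun Q hQ => ?_⟩
    · exact Submodule.map_le_iff_le_comap.2 fun s hsG => Submodule.mem_colon_singleton.1 (hGE hsG)
    · have := hQ.isPrime hs.finTypeOp
      obtain ⟨s, hsG, hsQ⟩ := SetLike.not_le_iff_exists.1 (hGQ Q hQ)
      exact mem_extendToPrime.2 ⟨s, hsQ, Submodule.mem_map_of_mem hsG⟩

theorem quasiStarInvertible_stableOp_iff (hs : IsSemistarOperation star) :
    QuasiStarInvertible (stableOp star) E ↔
      1 ∈ stableOp star (E * (stableOp star 1 / E)) := by
  have hle : E * (stableOp star 1 / E) ≤ stableOp star 1 :=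
    (mul_comm E _).trans_le (Submodule.le_div_iff_mul_le.1 le_rfl)
  exact ⟨fun h => Eq.ge h (hs.le_stableOp (Submodule.one_le.1 le_rfl)),
    fun h => le_antisymm (hs.stableOp_le_stableOp hle)
      (hs.stableOp_le_stableOp (Submodule.one_le.2 h))⟩

end IsSemistarOperation

theorem colon_singleton_ne_bot [IsFractionRing D K] (hE : E ≠ ⊥) (x : K) : E.colon {x} ≠ ⊥ := by
  have := (algebraMap D K).domain_nontrivial
  obtain ⟨e, he, he0⟩ := Submodule.exists_mem_ne_zero_of_ne_bot hE
  obtain ⟨b, a, hab⟩ := IsLocalization.exists_integer_multiple (nonZeroDivisors D) (x / e)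
  refine Submodule.ne_bot_iff _ |>.2 ⟨b, Submodule.mem_colon_singleton.2 ?_,
    nonZeroDivisors.coe_ne_zero b⟩
  convert E.smul_mem a he using 1
  rw [Algebra.smul_def a, hab, smul_mul_assoc, div_mul_cancel₀ x he0]

theorem IsSemistarOperation.stableOp_le_finTypeOp [IsFractionRing D K]
    (hs : IsSemistarOperation star) (hE : E ≠ ⊥) : stableOp star E ≤ finTypeOp star E := by
  intro x hx
  have h1 : 1 ∈ finTypeOp star (idealExt K (E.colon {x})) := by
    by_contra h1
    obtain ⟨Q, hQ, hle⟩ := hs.exists_quasiStarMaximal (colon_singleton_ne_bot hE x) h1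
    have := hQ.isPrime hs.finTypeOp
    exact mem_extendToPrime_iff_not_colon_le.1 (mem_stableOp.1 hx Q hQ) hle
  rw [← mul_one x]
  refine hs.finTypeOp.mul_mem_star (idealExt_ne_bot (colon_singleton_ne_bot hE x)) ?_ h1
  rintro _ ⟨s, hsE, rfl⟩
  rw [mul_comm, Algebra.linearMap_apply, ← Algebra.smul_def]
  exact Submodule.mem_colon_singleton.1 hsE

end StableOp

section Valuation

variable {D K : Type*} [CommRing D] [Field K] [Algebra D K]
  {star : Submodule D K → Submodule D K} {Q : Ideal D} [Q.IsPrime] {E F : Submodule D K}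

theorem div_mem_extendToPrime_one_of_dvd [FaithfulSMul D K] {a b : D}
    (h : algebraMap D (Localization.AtPrime Q) a ∣ algebraMap D (Localization.AtPrime Q) b) :
    algebraMap D K b / algebraMap D K a ∈ extendToPrime Q 1 := by
  obtain rfl | ha := eq_or_ne a 0
  · simp only [map_zero, div_zero, zero_mem]
  rw [← Ideal.mem_span_singleton, ← Set.image_singleton, ← Ideal.map_span,
    IsLocalization.algebraMap_mem_map_algebraMap_iff Q.primeCompl] at h
  obtain ⟨s, hs, hsb⟩ := h
  obtain ⟨c, hc⟩ := Ideal.mem_span_singleton'.1 hsb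
  have ha' : algebraMap D K a ≠ 0 := by simpa using ha
  refine mem_extendToPrime.2 ⟨s, hs, Submodule.mem_one.2 ⟨c, ?_⟩⟩
  rw [Algebra.smul_def, mul_div_assoc', eq_div_iff ha', ← map_mul, ← map_mul, hc]

theorem exists_forall_smul_mem_of_fg (hF : F.FG) (h : F ≤ extendToPrime Q E) :
    ∃ t ∉ Q, ∀ x ∈ F, t • x ∈ E := by
  induction F, hF using Submodule.fg_induction with
  | singleton x =>
    obtain ⟨t, ht, htx⟩ := mem_extendToPrime.1 (h (Submodule.mem_span_singleton_self x))
    refine ⟨t, ht, fun y hy => ?_⟩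
    obtain ⟨d, rfl⟩ := Submodule.mem_span_singleton.1 hy
    exact smul_comm t d x ▸ E.smul_mem d htx
  | sup F₁ F₂ _ _ ih₁ ih₂ =>
    obtain ⟨t₁, ht₁, h₁⟩ := ih₁ (le_sup_left.trans h)
    obtain ⟨t₂, ht₂, h₂⟩ := ih₂ (le_sup_right.trans h)
    refine ⟨t₁ * t₂, Ideal.IsPrime.mul_notMem ‹_› ht₁ ht₂, fun x hx => ?_⟩
    obtain ⟨x₁, hx₁, x₂, hx₂, rfl⟩ := Submodule.mem_sup.1 hx
    rw [smul_add, mul_smul, mul_smul, smul_comm t₁ t₂ x₁]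
    exact E.add_mem (E.smul_mem t₂ (h₁ x₁ hx₁)) (E.smul_mem t₁ (h₂ x₂ hx₂))

namespace IsValuationDomain

variable [IsFractionRing D K]

theorem mem_or_inv_mem (hV : IsValuationDomain (Localization.AtPrime Q)) (x : K) :
    x ∈ extendToPrime Q 1 ∨ x⁻¹ ∈ extendToPrime Q 1 := by
  obtain ⟨_, _⟩ := hV
  obtain ⟨b, a, -, rfl⟩ := IsFractionRing.div_surjective D x
  rw [inv_div]
  exact (ValuationRing.dvd_total _ _).imp div_mem_extendToPrime_one_of_dvd
    div_mem_extendToPrime_one_of_dvd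

theorem mem_extendToPrime_span_singleton_or
    (hV : IsValuationDomain (Localization.AtPrime Q)) (x y : K) :
    y ∈ extendToPrime Q (D ∙ x) ∨ x ∈ extendToPrime Q (D ∙ y) := by
  obtain rfl | hx := eq_or_ne x 0
  · exact .inr (zero_mem _)
  obtain rfl | hy := eq_or_ne y 0
  · exact .inl (zero_mem _)
  refine (hV.mem_or_inv_mem (y / x)).imp (fun h => ?_) fun h => ?_
  · rw [← mul_div_cancel₀ y hx]
    exact mul_mem_extendToPrime_of_mem_one (Submodule.mem_span_singleton_self x) h
  · rw [inv_div] at h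
    rw [← mul_div_cancel₀ x hy]
    exact mul_mem_extendToPrime_of_mem_one (Submodule.mem_span_singleton_self y) h

theorem exists_le_extendToPrime_span_singleton_of_fg
    (hV : IsValuationDomain (Localization.AtPrime Q)) (hE : E.FG) :
    ∃ f ∈ E, E ≤ extendToPrime Q (D ∙ f) := by
  induction E, hE using Submodule.fg_induction with
  | singleton x => exact ⟨x, Submodule.mem_span_singleton_self x, le_extendToPrime⟩
  | sup E₁ E₂ _ _ ih₁ ih₂ =>
    obtain ⟨⟨f₁, hf₁, hE₁⟩, f₂, hf₂, hE₂⟩ := ih₁, ih₂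
    obtain h | h := hV.mem_extendToPrime_span_singleton_or f₁ f₂
    · exact ⟨f₁, Submodule.mem_sup_left hf₁, sup_le hE₁ (hE₂.trans
        (extendToPrime_le_extendToPrime ((Submodule.span_singleton_le_iff_mem _ _).2 h)))⟩
    · exact ⟨f₂, Submodule.mem_sup_right hf₂, sup_le (hE₁.trans
        (extendToPrime_le_extendToPrime ((Submodule.span_singleton_le_iff_mem _ _).2 h))) hE₂⟩

theorem one_mem_extendToPrime_mul_one_div
    (hV : IsValuationDomain (Localization.AtPrime Q)) (hE : E ≠ ⊥) (hfg : E.FG) :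
    1 ∈ extendToPrime Q (E * (1 / E)) := by
  obtain ⟨f, hfE, hEf⟩ := hV.exists_le_extendToPrime_span_singleton_of_fg hfg
  obtain ⟨t, ht, htE⟩ := exists_forall_smul_mem_of_fg hfg hEf
  have hf : f ≠ 0 := by
    rintro rfl
    have ht0 : algebraMap D K t ≠ 0 := by
      rw [Ne, FaithfulSMul.algebraMap_eq_zero_iff]
      exact fun h => ht (h ▸ Q.zero_mem)
    refine hE ((Submodule.eq_bot_iff E).2 fun x hx => (mul_eq_zero.1 ?_).resolve_left ht0)
    simpa only [Submodule.span_zero_singleton, Submodule.mem_bot, Algebra.smul_def] using htE x hx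
  have hw : algebraMap D K t / f ∈ 1 / E := Submodule.mem_div_iff_forall_mul_mem.2 fun x hx => by
    obtain ⟨d, hd⟩ := Submodule.mem_span_singleton.1 (htE x hx)
    refine Submodule.mem_one.2 ⟨d, ?_⟩
    rw [div_mul_eq_mul_div, ← Algebra.smul_def, ← hd, Algebra.smul_def, mul_div_cancel_right₀ _ hf]
  refine mem_extendToPrime.2 ⟨t, ht, ?_⟩
  rw [← Algebra.algebraMap_eq_smul_one, ← mul_div_cancel₀ (algebraMap D K t) hf]
  exact Submodule.mul_mem_mul hfE hw

theorem star_one_le_extendToPrime_one (hV : IsValuationDomain (Localization.AtPrime Q))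
    (hs : IsSemistarOperation star) (hQs : QuasiStarIdeal star Q) : star 1 ≤ extendToPrime Q 1 := by
  intro z hz
  by_contra hzQ
  have hz0 : z ≠ 0 := fun h => hzQ (h ▸ zero_mem _)
  obtain ⟨s, hsQ, hsz⟩ := mem_extendToPrime.1 ((hV.mem_or_inv_mem z).resolve_left hzQ)
  obtain ⟨c, hc⟩ := Submodule.mem_one.1 hsz
  have hcz : algebraMap D K c * z = algebraMap D K s := by
    rw [hc, Algebra.smul_def, inv_mul_cancel_right₀ hz0]
  by_cases hcQ : c ∈ Q
  · refine hsQ (hQs.2 ▸ show algebraMap D K s ∈ star (idealExt K Q) from hcz ▸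
      hs.mul_mem_star one_ne_zero (fun y hy => ?_) hz)
    obtain ⟨d, rfl⟩ := Submodule.mem_one.1 hy
    exact ⟨c * d, Q.mul_mem_right d hcQ, map_mul (algebraMap D K) c d⟩
  · refine hzQ (mem_extendToPrime.2 ⟨c, hcQ, Submodule.mem_one.2 ⟨s, ?_⟩⟩)
    rw [Algebra.smul_def, hcz]

theorem star_le_extendToPrime (hV : IsValuationDomain (Localization.AtPrime Q))
    (hs : IsSemistarOperation star) (hQs : QuasiStarIdeal star Q) (hE : E ≠ ⊥) (hfg : E.FG) :
    star E ≤ extendToPrime Q E :=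
  fun y hy => mem_extendToPrime_of_one_mem_mul (hV.one_mem_extendToPrime_mul_one_div hE hfg)
    fun w hw => hV.star_one_le_extendToPrime_one hs hQs <| by
      rw [mul_comm]
      exact hs.mul_mem_star hE (Submodule.mem_div_iff_forall_mul_mem.1 hw) hy

end IsValuationDomain

end Valuation

section Dedekind

variable {D K : Type*} [CommRing D] [Field K] [Algebra D K]
  {star : Submodule D K → Submodule D K} {E : Submodule D K} {I : Ideal D}

theorem StarPMD.star_le_stableOp [IsFractionRing D K] (hP : StarPMD star)
    (hs : IsSemistarOperation star) (hE : E ≠ ⊥) (hfg : E.FG) : star E ≤ stableOp star E :=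
  le_iInf₂ fun Q hQ =>
    have := hQ.isPrime hs.finTypeOp
    (star_le_finTypeOp star hE hfg).trans
      ((hP Q hQ).star_le_extendToPrime hs.finTypeOp hQ.1 hE hfg)

theorem StarPMD.one_mem_stableOp_mul_one_div [IsFractionRing D K] (hP : StarPMD star)
    (hs : IsSemistarOperation star) (hE : E ≠ ⊥) (hfg : E.FG) :
    1 ∈ stableOp star (E * (1 / E)) :=
  mem_stableOp.2 fun Q hQ =>
    have := hQ.isPrime hs.finTypeOp
    (hP Q hQ).one_mem_extendToPrime_mul_one_div hE hfg

theorem StarNoetherian.exists_fg_le_starClosure [FaithfulSMul D K] (hN : StarNoetherian star)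
    (hs : IsSemistarOperation star) (hI : I ≠ ⊥) :
    ∃ F ≤ I, F ≠ ⊥ ∧ F.FG ∧ I ≤ starClosure star F := by
  have : WellFoundedGT {J : Ideal D // QuasiStarIdeal star J} :=
    wellFoundedGT_iff_monotone_chain_condition.2 fun c => by
      obtain ⟨n, hn⟩ := hN ⟨fun n => c n, fun _ _ h => c.monotone h⟩ fun n => (c n).2
      exact ⟨n, fun m hm => Subtype.ext (hn m hm).symm⟩
  let closures : Set {J : Ideal D // QuasiStarIdeal star J} :=
    {J | ∃ F ≤ I, F ≠ ⊥ ∧ F.FG ∧ starClosure star F = J}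
  have hne : closures.Nonempty := by
    obtain ⟨x, hxI, hx⟩ := Submodule.exists_mem_ne_zero_of_ne_bot hI
    have hspan : Ideal.span {x} ≠ ⊥ := by simpa using hx
    exact ⟨⟨_, hs.quasiStarIdeal_starClosure hspan⟩, Ideal.span {x},
      (Ideal.span_singleton_le_iff_mem I).2 hxI, hspan, Submodule.fg_span_singleton x, rfl⟩
  obtain ⟨⟨_, hJ⟩, ⟨F, hFI, hF, hfg, rfl⟩, hmax⟩ := wellFounded_gt.has_min closures hne
  refine ⟨F, hFI, hF, hfg, fun x hx => ?_⟩
  by_contra hxF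
  have hF' : F ⊔ Ideal.span {x} ≠ ⊥ := ne_bot_of_le_ne_bot hF le_sup_left
  have hx' : x ∈ starClosure star (F ⊔ Ideal.span {x}) :=
    hs.le_starClosure hF' (Ideal.mem_sup_right (Ideal.mem_span_singleton_self x))
  have hlt : starClosure star F < starClosure star (F ⊔ Ideal.span {x}) :=
    SetLike.lt_iff_le_and_exists.2 ⟨hs.starClosure_mono hF le_sup_left, x, hx', hxF⟩
  exact hmax ⟨_, hs.quasiStarIdeal_starClosure hF'⟩
    ⟨_, sup_le hFI ((Ideal.span_singleton_le_iff_mem I).2 hx), hF',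
      Submodule.FG.sup hfg (Submodule.fg_span_singleton x), rfl⟩ hlt

theorem StarDedekind.quasiStarInvertible_idealExt [IsFractionRing D K] (hD : StarDedekind star)
    (hs : IsSemistarOperation star) (hI : I ≠ ⊥) :
    QuasiStarInvertible (stableOp star) (idealExt K I) := by
  obtain ⟨hN, hP⟩ := hD
  obtain ⟨F, hFI, hF, hfg, hIF⟩ := hN.exists_fg_le_starClosure hs hI
  have hE : idealExt K F ≠ ⊥ := idealExt_ne_bot hF
  have hEfg : (idealExt K F).FG := Submodule.FG.map _ hfg
  have hIE : idealExt K I ≤ stableOp star (idealExt K F) :=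
    (Submodule.map_le_iff_le_comap.2 hIF).trans (hP.star_le_stableOp hs hE hEfg)
  have hdiv : 1 / idealExt K F ≤ stableOp star 1 / idealExt K I := fun w hw =>
    Submodule.mem_div_iff_forall_mul_mem.2 fun x hx => hs.mul_mem_stableOp
      (fun z hz => hs.le_stableOp (Submodule.mem_div_iff_forall_mul_mem.1 hw z hz)) (hIE hx)
  exact hs.quasiStarInvertible_stableOp_iff.2 (stableOp_mono star
    (mul_le_mul' (idealExt_mono hFI) hdiv) (hP.one_mem_stableOp_mul_one_div hs hE hEfg))

end Dedekind

section StableFinite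

variable {D K : Type*} [CommRing D] [Field K] [Algebra D K]
  {star : Submodule D K → Submodule D K} {I P Q : Ideal D}

/-- An ideal with the same ⋆̃-closure as some finitely generated ideal which it contains. -/
def StableFinite (star : Submodule D K → Submodule D K) (I : Ideal D) : Prop :=
  ∃ F ≤ I, F.FG ∧ I ≤ starClosure (stableOp star) F

theorem starClosure_stableOp_mono (star : Submodule D K → Submodule D K) :
    Monotone (starClosure (stableOp star)) :=
  fun _ _ h => Submodule.comap_mono (stableOp_mono star (idealExt_mono h))

theorem IsSemistarOperation.starNoetherian_of_stableFinite [IsFractionRing D K]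
    (hs : IsSemistarOperation star) (h : ∀ I : Ideal D, StableFinite star I) :
    StarNoetherian star := by
  intro c hc
  obtain ⟨F, hFle, hF, hle⟩ := h (sSup (Set.range c))
  obtain ⟨_, ⟨n, rfl⟩, hFn⟩ := exists_le_of_fg_of_le_sSup hF (Set.range_nonempty c)
    c.monotone.directed_le.directedOn_range hFle
  refine ⟨n, fun m hnm => le_antisymm ?_ (c.monotone hnm)⟩
  have hE := idealExt_ne_bot (K := K) (hc n).1
  calc c m ≤ starClosure (stableOp star) F := (le_sSup (Set.mem_range_self m)).trans hle
    _ ≤ starClosure (stableOp star) (c n) := starClosure_stableOp_mono star hFn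
    _ ≤ starClosure star (c n) := Submodule.comap_mono
      ((hs.stableOp_le_finTypeOp hE).trans (hs.finTypeOp_le_star hE))
    _ = c n := (hc n).2

variable [FaithfulSMul D K]

theorem algebraMap_mem_extendToPrime_idealExt [Q.IsPrime] {x : D} :
    algebraMap D K x ∈ extendToPrime Q (idealExt K I) ↔ ∃ s ∉ Q, s * x ∈ I := by
  simp only [mem_extendToPrime, Algebra.smul_def, ← map_mul, algebraMap_mem_idealExt]

namespace IsSemistarOperation

theorem mem_starClosure_stableOp (hs : IsSemistarOperation star) {x : D} :
    x ∈ starClosure (stableOp star) I ↔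
      ∀ Q, QuasiStarMaximal (finTypeOp star) Q → ∃ s ∉ Q, s * x ∈ I :=
  mem_stableOp.trans <| forall₂_congr fun _ hQ =>
    have := hQ.isPrime hs.finTypeOp
    algebraMap_mem_extendToPrime_idealExt

theorem le_starClosure_stableOp (hs : IsSemistarOperation star) :
    I ≤ starClosure (stableOp star) I :=
  fun _ hx => hs.le_stableOp (Submodule.mem_map_of_mem hx)

theorem quasiStarPrime_stableOp (hs : IsSemistarOperation star) (hP : P.IsPrime) (hP0 : P ≠ ⊥)
    (hQ : QuasiStarMaximal (finTypeOp star) Q) (hPQ : P ≤ Q) :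
    QuasiStarPrime (stableOp star) P := by
  refine ⟨hP, hP0, le_antisymm (fun x hx => ?_) hs.le_starClosure_stableOp⟩
  obtain ⟨s, hsQ, hsx⟩ := hs.mem_starClosure_stableOp.1 hx Q hQ
  exact (hP.mem_or_mem hsx).resolve_left fun hsP => hsQ (hPQ hsP)

theorem stableFinite_of_fg (hs : IsSemistarOperation star) (hI : I.FG) : StableFinite star I :=
  ⟨I, le_rfl, hI, hs.le_starClosure_stableOp⟩

theorem stableFinite_of_quasiStarInvertible (hs : IsSemistarOperation star)
    (hI : QuasiStarInvertible (stableOp star) (idealExt K I)) : StableFinite star I := by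
  have hfin := hs.isFinitary_stableOp.comp <|
    (isFinitary_mul_right (stableOp star 1 / idealExt K I)).comp
      (isFinitary_map (Algebra.linearMap D K))
  obtain ⟨F, hFI, hF, h1⟩ := hfin.exists_fg (hs.quasiStarInvertible_stableOp_iff.1 hI)
  refine ⟨F, hFI, hF, fun x hx => hs.mem_stableOp_of_one_mem_mul h1 fun w hw => ?_⟩
  rw [mul_comm]
  exact Submodule.mem_div_iff_forall_mul_mem.1 hw _ (Submodule.mem_map_of_mem hx)

theorem isOka_stableFinite (hs : IsSemistarOperation star) : Ideal.IsOka (StableFinite star) where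
  top := hs.stableFinite_of_fg (Ideal.fg_top D)
  oka {I a} := by
    rintro ⟨G, hGle, hG, hIG⟩ ⟨H, hHle, hH, hIH⟩
    obtain ⟨F, hFI, hF, hGF⟩ := (isFinitary_sup_right (Ideal.span {a})).exists_fg_le hG hGle
    refine ⟨F ⊔ Ideal.span {a} * H, sup_le hFI (Ideal.span_singleton_mul_le_iff.2 fun r hr => ?_),
      Submodule.FG.sup hF (Submodule.FG.mul (Submodule.fg_span_singleton a) hH), fun x hx => ?_⟩
    · rw [mul_comm]
      exact Ideal.mem_colon_span_singleton.1 (hHle hr)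
    refine hs.mem_starClosure_stableOp.2 fun Q hQ => ?_
    have hx' := starClosure_stableOp_mono star hGF (hIG (Ideal.mem_sup_left hx))
    obtain ⟨s, hsQ, hsx⟩ := hs.mem_starClosure_stableOp.1 hx' Q hQ
    obtain ⟨f, hf, b, hb, hfb⟩ := Submodule.mem_sup.1 hsx
    obtain ⟨r, rfl⟩ := Ideal.mem_span_singleton'.1 hb
    have hr : r ∈ I.colon (Ideal.span {a}) := by
      rw [Ideal.mem_colon_span_singleton, ← I.add_mem_iff_right (hFI hf), hfb]
      exact I.mul_mem_left s hx
    obtain ⟨t, htQ, htr⟩ := hs.mem_starClosure_stableOp.1 (hIH hr) Q hQ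
    refine ⟨t * s, (hQ.isPrime hs.finTypeOp).mul_notMem htQ hsQ, ?_⟩
    rw [mul_assoc, ← hfb, mul_add, ← mul_assoc, mul_comm _ a]
    exact Submodule.add_mem_sup (Ideal.mul_mem_left F t hf)
      (Ideal.mul_mem_mul (Ideal.mem_span_singleton_self a) htr)

theorem stableFinite_of_isPrime (hs : IsSemistarOperation star)
    (h : ∀ P : Ideal D, QuasiStarPrime (stableOp star) P →
      QuasiStarInvertible (stableOp star) (idealExt K P)) (hP : P.IsPrime) :
    StableFinite star P := by
  obtain rfl | hP0 := eq_or_ne P ⊥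
  · exact hs.stableFinite_of_fg Submodule.fg_bot
  by_cases hle : ∃ Q, QuasiStarMaximal (finTypeOp star) Q ∧ P ≤ Q
  · obtain ⟨Q, hQ, hPQ⟩ := hle
    exact hs.stableFinite_of_quasiStarInvertible (h P (hs.quasiStarPrime_stableOp hP hP0 hQ hPQ))
  · obtain ⟨G, hGP, hG, hGQ⟩ := hs.exists_fg_forall_not_le fun Q hQ hPQ => hle ⟨Q, hQ, hPQ⟩
    refine ⟨G, hGP, hG, fun x _ => hs.mem_starClosure_stableOp.2 fun Q hQ => ?_⟩
    obtain ⟨s, hsG, hsQ⟩ := SetLike.not_le_iff_exists.1 (hGQ Q hQ)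
    exact ⟨s, hsQ, G.mul_mem_right x hsG⟩

theorem stableFinite (hs : IsSemistarOperation star)
    (h : ∀ P : Ideal D, QuasiStarPrime (stableOp star) P →
      QuasiStarInvertible (stableOp star) (idealExt K P)) : ∀ I : Ideal D, StableFinite star I := by
  refine hs.isOka_stableFinite.forall_of_forall_prime' ?_ fun P => hs.stableFinite_of_isPrime h
  rintro C - hC I hI ⟨F, hFle, hF, hle⟩
  obtain ⟨J, hJ, hFJ⟩ := exists_le_of_fg_of_le_sSup hF ⟨I, hI⟩ hC.directedOn hFle
  exact ⟨J, hJ, F, hFJ, hF, (le_sSup hJ).trans hle⟩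

end IsSemistarOperation

end StableFinite

section LocallyPrincipal

variable {D K : Type*} [CommRing D] [Field K] [Algebra D K] [FaithfulSMul D K]
  {star : Submodule D K → Submodule D K} {I Q : Ideal D} [Q.IsPrime] {E W : Submodule D K}

theorem one_notMem_extendToPrime_idealExt_self : (1 : K) ∉ extendToPrime Q (idealExt K Q) := by
  rw [← map_one (algebraMap D K), algebraMap_mem_extendToPrime_idealExt]
  rintro ⟨s, hs, hsQ⟩
  exact hs (mul_one s ▸ hsQ)

theorem exists_le_extendToPrime_span_singleton_of_one_mem_mul (hEW : E * W ≤ extendToPrime Q 1)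
    (h1 : 1 ∈ extendToPrime Q (E * W)) : ∃ f ∈ E, E ≤ extendToPrime Q (D ∙ f) := by
  obtain ⟨f, hf, w, hw, hfw⟩ : ∃ f ∈ E, ∃ w ∈ W, f * w ∉ extendToPrime Q (idealExt K Q) := by
    by_contra! h
    exact one_notMem_extendToPrime_idealExt_self
      (extendToPrime_le_extendToPrime (Submodule.mul_le.2 h) h1)
  obtain ⟨s, hsQ, hsfw⟩ := mem_extendToPrime.1 (hEW (Submodule.mul_mem_mul hf hw))
  obtain ⟨d, hd⟩ := Submodule.mem_one.1 hsfw
  have hdQ : d ∉ Q := fun hdQ => hfw (mem_extendToPrime.2 ⟨s, hsQ, d, hdQ, hd⟩)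
  have h1fw : 1 ∈ extendToPrime Q ((D ∙ f) * (D ∙ w)) := by
    refine mem_extendToPrime.2 ⟨d, hdQ, ?_⟩
    rw [← Algebra.algebraMap_eq_smul_one, hd]
    exact Submodule.smul_mem _ s (Submodule.mul_mem_mul (Submodule.mem_span_singleton_self f)
      (Submodule.mem_span_singleton_self w))
  refine ⟨f, hf, fun y hy => mem_extendToPrime_of_one_mem_mul h1fw fun z hz => ?_⟩
  exact hEW (Submodule.mul_mem_mul hy ((Submodule.span_singleton_le_iff_mem _ _).2 hw hz))

theorem algebraMap_mem_map_localization_atPrime {x : D} :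
    algebraMap D (Localization.AtPrime Q) x ∈ I.map (algebraMap D (Localization.AtPrime Q)) ↔
      algebraMap D K x ∈ extendToPrime Q (idealExt K I) :=
  (IsLocalization.algebraMap_mem_map_algebraMap_iff Q.primeCompl _ I x).trans
    algebraMap_mem_extendToPrime_idealExt.symm

theorem IsSemistarOperation.isPrincipal_map_of_quasiStarInvertible (hs : IsSemistarOperation star)
    (hQ : QuasiStarMaximal (finTypeOp star) Q)
    (hI : QuasiStarInvertible (stableOp star) (idealExt K I)) :
    (I.map (algebraMap D (Localization.AtPrime Q))).IsPrincipal := by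
  have hEW : idealExt K I * (stableOp star 1 / idealExt K I) ≤ extendToPrime Q 1 :=
    (hs.le_stableOp.trans hI.le).trans (stableOp_le_extendToPrime hQ)
  obtain ⟨_, ⟨a, ha, rfl⟩, hle⟩ := exists_le_extendToPrime_span_singleton_of_one_mem_mul hEW
    (stableOp_le_extendToPrime hQ (hs.quasiStarInvertible_stableOp_iff.1 hI))
  have hspan : D ∙ Algebra.linearMap D K a = idealExt K (Ideal.span {a}) := by
    rw [idealExt, Ideal.span, Submodule.map_span, Set.image_singleton]
  refine ⟨algebraMap D _ a, le_antisymm (Ideal.map_le_iff_le_comap.2 fun x hx => ?_) ?_⟩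
  · rw [← Set.image_singleton]
    have := algebraMap_mem_map_localization_atPrime.2 (hspan ▸ hle (Submodule.mem_map_of_mem hx))
    rwa [Ideal.map_span] at this
  · exact (Submodule.span_singleton_le_iff_mem _ _).2 (Ideal.mem_map_of_mem _ ha)

theorem IsSemistarOperation.starPMD [IsDomain D] (hs : IsSemistarOperation star)
    (h : ∀ P : Ideal D, QuasiStarPrime (stableOp star) P →
      QuasiStarInvertible (stableOp star) (idealExt K P)) : StarPMD star := by
  intro Q _ hQ
  have : IsPrincipalIdealRing (Localization.AtPrime Q) := by
    refine .of_prime_ne_bot fun p hp hp0 => ?_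
    have hp_map := IsLocalization.map_under Q.primeCompl (Localization.AtPrime Q) p
    have hP0 : p.under D ≠ ⊥ := fun hP => hp0 (by rw [← hp_map, hP, Ideal.map_bot])
    rw [← hp_map]
    have hPQ : p.under D ≤ Q :=
      (Ideal.comap_mono (IsLocalRing.le_maximalIdeal hp.ne_top)).trans_eq
        (IsLocalization.AtPrime.under_maximalIdeal (Localization.AtPrime Q) Q)
    exact hs.isPrincipal_map_of_quasiStarInvertible hQ
      (h _ (hs.quasiStarPrime_stableOp inferInstance hP0 hQ hPQ))
  exact ⟨inferInstance, inferInstance⟩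

end LocallyPrincipal

section Statement

variable {D : Type*} [CommRing D] [IsDomain D]
variable {K : Type*} [Field K] [Algebra D K] [IsFractionRing D K]

/-- `D` an integral domain, `⋆` a semistar operation on `D`. Then `D`
is a ⋆-Dedekind domain iff every nonzero quasi-⋆̃-prime ideal of `D` is
quasi-⋆̃-invertible. -/
theorem starDedekind_iff_quasiStablePrimes_invertible
    (star : Submodule D K → Submodule D K) (hstar : IsSemistarOperation star) :
    StarDedekind star ↔
      ∀ P : Ideal D, QuasiStarPrime (stableOp star) P →
        QuasiStarInvertible (stableOp star) (idealExt K P) := by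
  refine ⟨fun hD P hP => hD.quasiStarInvertible_idealExt hstar hP.2.1, fun h => ⟨?_, ?_⟩⟩
  · exact hstar.starNoetherian_of_stableFinite (hstar.stableFinite h)
  · exact hstar.starPMD h

end Statement
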